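/- Fix β > 0, K > 0 and suppose that the set of global minimum points of G_{β,K} over ℝ is {z_1, ..., z_m} with m = 2 or m = 3, and that G_{β,K}''(z_j) > 0 for each j. For each j set σ_j² = 2βK c_β''(2βK z_j) / G_{β,K}''(z_j). Then for each j = 1, ..., m there exists A = A(z_j) > 0 such that for every a ∈ (0, A), the conditional distribution of (S_n − n z_j)/n^{1/2} under P_{n,β,K} given the event {S_n/n ∈ [z_j − a, z_j + a]} converges weakly, as n → ∞, to the centered normal distribution N(0, σ_j²). -/

import Mathlib

noncomputable section

open scoped BigOperators

/-- `c_β(t) = log[(1 + e^{−β}(e^t + e^{−t}))/(1 + 2e^{−β})]`. -/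
def cBeta (β t : ℝ) : ℝ :=
  Real.log ((1 + Real.exp (-β) * (Real.exp t + Real.exp (-t))) / (1 + 2 * Real.exp (-β)))

/-- `G_{β,K}(z) = βK z² − c_β(2βK z)`. -/
def Gfun (β K z : ℝ) : ℝ := β * K * z ^ 2 - cBeta β (2 * β * K * z)

/-- The spin space `Λ = {-1, 0, 1} ⊆ ℤ`. -/
abbrev Spin : Type := ({-1, 0, 1} : Finset ℤ)

/-- The total spin `S_n(ω) = Σ_j ω_j` (as a real number). -/
def totalSpin (n : ℕ) (ω : Fin n → Spin) : ℝ := ∑ j, ((ω j : ℤ) : ℝ)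

/-- The energy `H_{n,K}(ω) = Σ_j ω_j² − (K/n)(Σ_j ω_j)²`. -/
def ham (K : ℝ) (n : ℕ) (ω : Fin n → Spin) : ℝ :=
  (∑ j, ((ω j : ℤ) : ℝ) ^ 2) - (K / n) * (∑ j, ((ω j : ℤ) : ℝ)) ^ 2

/-- The canonical ensemble `P_{n,β,K}`: the probability mass of a configuration
`ω ∈ Λⁿ` is proportional to `exp(−β H_{n,K}(ω))`. -/
def canonP (β K : ℝ) (n : ℕ) (ω : Fin n → Spin) : ℝ :=
  Real.exp (-β * ham K n ω) / ∑ ω' : Fin n → Spin, Real.exp (-β * ham K n ω')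

open scoped Classical

section Aux
open MeasureTheory ProbabilityTheory Filter Topology

theorem mgf_pi {S : Type*} [Fintype S] [DecidableEq S] {R : Type*} [CommSemiring R] (h : S → R) (n : ℕ) :
    ∑ ω : Fin n → S, ∏ j, h (ω j) = (∑ s, h s) ^ n := by
  rw [Fintype.sum_pow]

theorem fin_integral {ι : Type*} [Fintype ι] (w : ι → ℝ) (hw : ∀ i, 0 ≤ w i) (Y : ι → ℝ)
    {E : Type*} [NormedAddCommGroup E] [NormedSpace ℝ E] [CompleteSpace E] (g : ℝ → E) :
    ∫ y, g y ∂(∑ i, ENNReal.ofReal (w i) • Measure.dirac (Y i)) = ∑ i, w i • g (Y i) := by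
  rw [integral_finsetSum_measure]
  · refine Finset.sum_congr rfl fun i _ => ?_
    rw [integral_smul_measure, integral_dirac, ENNReal.toReal_ofReal (hw i)]
  · intro i _
    refine Integrable.smul_measure ?_ (by simp)
    exact integrable_dirac (by simp)

theorem fin_isProb {ι : Type*} [Fintype ι] (w : ι → ℝ) (hw : ∀ i, 0 ≤ w i) (hs : ∑ i, w i = 1) (Y : ι → ℝ) :
    IsProbabilityMeasure (∑ i, ENNReal.ofReal (w i) • Measure.dirac (Y i)) := by
  constructor
  simp only [Measure.coe_finsetSum, Finset.sum_apply, Measure.smul_apply, measure_univ, smul_eq_mul, mul_one]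
  rw [← ENNReal.ofReal_sum_of_nonneg (fun i _ => hw i), hs]; simp

theorem fin_clt {S : Type*} [Fintype S] [DecidableEq S] (q x : S → ℝ) (hq : ∀ s, 0 ≤ q s)
    (h1 : ∑ s, q s = 1) (hm : ∑ s, q s * x s = 0) (v : ℝ) (hv : 0 < v)
    (hvar : ∑ s, q s * x s ^ 2 = v) (g : ℝ → ℝ) (hg : Continuous g) (C : ℝ) (hC : ∀ y, |g y| ≤ C) :
    Tendsto (fun n : ℕ => ∑ ω : Fin n → S, (∏ j, q (ω j)) * g ((∑ j, x (ω j)) / √n)) atTop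
      (𝓝 (∫ y, g y ∂(gaussianReal 0 v.toNNReal))) := by
  have hw : ∀ n : ℕ, ∀ ω : Fin n → S, 0 ≤ ∏ j, q (ω j) :=
    fun n ω => Finset.prod_nonneg fun j _ => hq _
  have hws : ∀ n : ℕ, ∑ ω : Fin n → S, ∏ j, q (ω j) = 1 := fun n => by
    rw [mgf_pi, h1, one_pow]
  let μ : ℕ → ProbabilityMeasure ℝ := fun n =>
    ⟨∑ ω : Fin n → S, ENNReal.ofReal (∏ j, q (ω j)) • Measure.dirac ((∑ j, x (ω j)) / √n),
      fin_isProb _ (hw n) (hws n) _⟩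
  let ν : ProbabilityMeasure ℝ := ⟨gaussianReal 0 v.toNNReal, inferInstance⟩
  have key : Tendsto μ atTop (𝓝 ν) := by
    refine ProbabilityMeasure.tendsto_iff_tendsto_charFun.2 fun t ↦ ?_
    let P : Measure ℝ := ∑ s, ENNReal.ofReal (q s) • Measure.dirac (x s / √v)
    have : IsProbabilityMeasure P := fin_isProb q hq h1 _
    have hsv : √v ≠ 0 := (Real.sqrt_pos.2 hv).ne'
    have e0 : P[id] = 0 := by
      rw [fin_integral q hq]
      simp only [smul_eq_mul, id, ← mul_div_assoc, ← Finset.sum_div, hm, zero_div]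
    have e1 : P[(id : ℝ → ℝ) ^ 2] = 1 := by
      rw [fin_integral q hq]
      simp only [smul_eq_mul, Pi.pow_apply, id, div_pow, ← mul_div_assoc, ← Finset.sum_div, hvar, Real.sq_sqrt hv.le]
      exact div_self hv.ne'
    have := tendsto_charFun_inv_sqrt_mul_pow (P := P) (X := id) aemeasurable_id e0 e1 (√v * t)
    convert this using 2
    · rename_i n
      rw [Measure.map_id, charFun_apply_real, charFun_apply_real]
      change ∫ y, _ ∂(∑ ω : Fin n → S, ENNReal.ofReal (∏ j, q (ω j)) • Measure.dirac ((∑ j, x (ω j)) / √n)) = (∫ y, _ ∂(∑ s, ENNReal.ofReal (q s) • Measure.dirac (x s / √v))) ^ n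
      rw [fin_integral _ (hw n), fin_integral q hq, ← mgf_pi]
      refine Finset.sum_congr rfl fun ω _ => ?_
      simp only [Complex.real_smul]
      rw [Finset.prod_mul_distrib, ← Complex.exp_sum]
      push_cast
      congr 2
      rw [Finset.sum_div, Finset.mul_sum, Finset.sum_mul]
      refine Finset.sum_congr rfl fun j _ => ?_
      have : (√v : ℂ) ≠ 0 := by exact_mod_cast hsv
      field_simp
    · change charFun (gaussianReal 0 v.toNNReal) t = _
      rw [charFun_gaussianReal]
      congr 1
      have : ((√v : ℝ) : ℂ) ^ 2 = v := by rw [← Complex.ofReal_pow, Real.sq_sqrt hv.le]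
      push_cast
      rw [Real.coe_toNNReal _ hv.le, mul_pow, this]
      ring
  rw [ProbabilityMeasure.tendsto_iff_forall_integral_tendsto] at key
  have := key (BoundedContinuousFunction.ofNormedAddCommGroup g hg C hC)
  convert this using 2
  · rename_i n
    change _ = ∫ y, g y ∂(∑ ω : Fin n → S, ENNReal.ofReal (∏ j, q (ω j)) • Measure.dirac ((∑ j, x (ω j)) / √n))
    rw [fin_integral _ (hw n)]
    rfl
  · rfl

theorem exp_window (θ : ℝ) (hθ : 0 < θ) (y B : ℝ) (hB : 2 * θ * |y| + 1 ≤ B) :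
    Real.exp (θ * y ^ 2) ≤ Real.exp (1 / (4 * θ)) *
      ∫ u in Set.Icc (-B) B, Real.exp (u * y) * Real.exp (-u ^ 2 / (4 * θ)) := by
  have hcont : Continuous fun u : ℝ => Real.exp (u * y) * Real.exp (-u ^ 2 / (4 * θ)) := by fun_prop
  have hint : IntegrableOn (fun u : ℝ => Real.exp (u * y) * Real.exp (-u ^ 2 / (4 * θ)))
      (Set.Icc (-B) B) := hcont.continuousOn.integrableOn_compact isCompact_Icc
  have hsub : Set.Icc (2 * θ * y) (2 * θ * y + 1) ⊆ Set.Icc (-B) B := by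
    have h1 := neg_abs_le y
    have h2 := le_abs_self y
    have h3 : 2 * θ * y ≤ 2 * θ * |y| := by gcongr
    have h4 : 2 * θ * (-|y|) ≤ 2 * θ * y := by gcongr
    apply Set.Icc_subset_Icc <;> linarith
  have hmono := setIntegral_mono_set hint
    (Filter.Eventually.of_forall fun u => by positivity) (LE.le.eventuallyLE hsub)
  have hlow : Real.exp (θ * y ^ 2 - 1 / (4 * θ)) ≤ ∫ u in Set.Icc (2 * θ * y) (2 * θ * y + 1),
      Real.exp (u * y) * Real.exp (-u ^ 2 / (4 * θ)) := by
    have := setIntegral_mono_on (μ := volume) (s := Set.Icc (2 * θ * y) (2 * θ * y + 1))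
      (f := fun _ => Real.exp (θ * y ^ 2 - 1 / (4 * θ)))
      (g := fun u : ℝ => Real.exp (u * y) * Real.exp (-u ^ 2 / (4 * θ)))
      (integrableOn_const (by simp)) (hint.mono_set hsub) measurableSet_Icc ?_
    · simpa using this
    · intro u hu
      rw [← Real.exp_add]
      apply Real.exp_le_exp.2
      have : u * y + -u ^ 2 / (4 * θ) = θ * y ^ 2 - (u - 2 * θ * y) ^ 2 / (4 * θ) := by
        field_simp; ring
      rw [this]
      have h5 : (u - 2 * θ * y) ^ 2 ≤ 1 := by nlinarith [hu.1, hu.2]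
      gcongr
  calc Real.exp (θ * y ^ 2) = Real.exp (1 / (4 * θ)) * Real.exp (θ * y ^ 2 - 1 / (4 * θ)) := by
        rw [← Real.exp_add]; ring_nf
    _ ≤ _ := by gcongr; exact hlow.trans hmono

theorem exp_moment {S : Type*} [Fintype S] [DecidableEq S] (q x : S → ℝ) (hq : ∀ s, 0 ≤ q s)
    (b v' θ a : ℝ) (hθ : 0 < θ) (ha : 0 < a) (hθv : 2 * θ * v' < 1)
    (hab : 2 * θ * a < b)
    (hmgf : ∀ s, |s| ≤ b → ∑ i, q i * Real.exp (s * x i) ≤ Real.exp (v' * s ^ 2 / 2)) :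
    ∃ C : ℝ, ∀ᶠ n : ℕ in atTop, ∑ ω ∈ Finset.univ.filter (fun ω : Fin n → S =>
        |(∑ j, x (ω j)) / √n| ≤ a * √n),
      (∏ j, q (ω j)) * Real.exp (θ * ((∑ j, x (ω j)) / √n) ^ 2) ≤ C := by
  have hc : 0 < 1 / (4 * θ) - v' / 2 := by
    rw [sub_pos, div_lt_div_iff₀ (by norm_num) (by positivity)]; linarith
  refine ⟨Real.exp (1 / (4 * θ)) * ∫ u : ℝ, Real.exp (-(1 / (4 * θ) - v' / 2) * u ^ 2), ?_⟩
  have hsq : Tendsto (fun n : ℕ => √(n : ℝ)) atTop atTop :=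
    Real.tendsto_sqrt_atTop.comp tendsto_natCast_atTop_atTop
  filter_upwards [hsq.eventually_ge_atTop (1 / (b - 2 * θ * a)), eventually_gt_atTop 0] with n hn hn0
  have hn0' : (0 : ℝ) < n := by exact_mod_cast hn0
  have hsn : 0 < √(n : ℝ) := Real.sqrt_pos.2 hn0'
  have hn' : 2 * θ * (a * √n) + 1 ≤ b * √n := by
    rw [div_le_iff₀ (by linarith)] at hn
    linarith
  set Y : (Fin n → S) → ℝ := fun ω => (∑ j, x (ω j)) / √n with hY
  have hw : ∀ ω : Fin n → S, 0 ≤ ∏ j, q (ω j) :=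
    fun ω => Finset.prod_nonneg fun j _ => hq _
  set F : ℝ → ℝ → ℝ := fun y u => Real.exp (u * y) * Real.exp (-u ^ 2 / (4 * θ)) with hF
  have hFi : ∀ y, IntegrableOn (F y) (Set.Icc (-(b * √n)) (b * √n)) := fun y =>
    Continuous.integrableOn_Icc (by fun_prop)
  calc _ ≤ ∑ ω ∈ Finset.univ.filter (fun ω : Fin n → S => |Y ω| ≤ a * √n),
          (∏ j, q (ω j)) * (Real.exp (1 / (4 * θ)) *
            ∫ u in Set.Icc (-(b * √n)) (b * √n), F (Y ω) u) := by
        refine Finset.sum_le_sum fun ω hω => ?_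
        refine mul_le_mul_of_nonneg_left ?_ (hw ω)
        refine exp_window θ hθ _ _ (le_trans ?_ hn')
        have := (Finset.mem_filter.1 hω).2
        gcongr
    _ ≤ ∑ ω : Fin n → S, (∏ j, q (ω j)) * (Real.exp (1 / (4 * θ)) *
            ∫ u in Set.Icc (-(b * √n)) (b * √n), F (Y ω) u) := by
        refine Finset.sum_le_sum_of_subset_of_nonneg (Finset.filter_subset _ _) fun ω _ _ => ?_
        refine mul_nonneg (hw ω) (mul_nonneg (by positivity) ?_)
        exact integral_nonneg fun u => by positivity
    _ = Real.exp (1 / (4 * θ)) * ∫ u in Set.Icc (-(b * √n)) (b * √n),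
          ∑ ω : Fin n → S, (∏ j, q (ω j)) * F (Y ω) u := by
        rw [integral_finsetSum _ fun ω _ => (hFi _).const_mul _, Finset.mul_sum]
        refine Finset.sum_congr rfl fun ω _ => ?_
        rw [integral_const_mul]; ring
    _ ≤ Real.exp (1 / (4 * θ)) * ∫ u in Set.Icc (-(b * √n)) (b * √n),
          Real.exp (-(1 / (4 * θ) - v' / 2) * u ^ 2) := by
        gcongr ?_ * ?_
        refine setIntegral_mono_on (integrable_finsetSum _ fun ω _ => (hFi _).const_mul _)
          (integrable_exp_neg_mul_sq hc).integrableOn measurableSet_Icc fun u hu => ?_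
        have e1 : ∑ ω : Fin n → S, (∏ j, q (ω j)) * F (Y ω) u =
            (∑ i, q i * Real.exp (u / √n * x i)) ^ n * Real.exp (-u ^ 2 / (4 * θ)) := by
          rw [← mgf_pi, Finset.sum_mul]
          refine Finset.sum_congr rfl fun ω _ => ?_
          rw [Finset.prod_mul_distrib, ← Real.exp_sum, ← Finset.mul_sum]
          simp only [hF, hY]
          rw [← mul_assoc]
          congr 3
          ring
        rw [e1]
        have hu' : |u / √n| ≤ b := by
          rw [abs_div, abs_of_pos hsn, div_le_iff₀ hsn]
          exact abs_le.2 hu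
        have e2 := pow_le_pow_left₀ (Finset.sum_nonneg fun i _ => mul_nonneg (hq i) (Real.exp_pos _).le)
          (hmgf _ hu') n
        calc _ ≤ Real.exp (v' * (u / √n) ^ 2 / 2) ^ n * Real.exp (-u ^ 2 / (4 * θ)) := by gcongr
          _ = _ := by
            rw [← Real.exp_nat_mul, ← Real.exp_add, div_pow, Real.sq_sqrt hn0'.le]
            congr 1
            field_simp
            ring
    _ ≤ _ := by
        gcongr ?_ * ?_
        exact setIntegral_le_integral (integrable_exp_neg_mul_sq hc)
          (Filter.Eventually.of_forall fun u => by positivity)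

/-- cutoff -/
def cutoff (R y : ℝ) : ℝ := max 0 (min 1 (R + 1 - |y|))

theorem cutoff_cont (R : ℝ) : Continuous (cutoff R) := by unfold cutoff; fun_prop
theorem cutoff_nonneg (R y : ℝ) : 0 ≤ cutoff R y := le_max_left _ _
theorem cutoff_le_one (R y : ℝ) : cutoff R y ≤ 1 := max_le zero_le_one (min_le_left _ _)
theorem cutoff_eq_one (R y : ℝ) (h : |y| ≤ R) : cutoff R y = 1 := by
  unfold cutoff; rw [min_eq_left (by linarith)]; simp
theorem cutoff_eq_zero (R y : ℝ) (h : R + 1 ≤ |y|) : cutoff R y = 0 := by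
  unfold cutoff; rw [max_eq_left]; exact (min_le_right _ _).trans (by linarith)

theorem weighted_clt {S : Type*} [Fintype S] [DecidableEq S] (q x : S → ℝ) (hq : ∀ s, 0 ≤ q s)
    (h1 : ∑ s, q s = 1) (hm : ∑ s, q s * x s = 0) (v : ℝ) (hv : 0 < v)
    (hvar : ∑ s, q s * x s ^ 2 = v) (κ θ a C₀ : ℝ) (hκ : 0 < κ) (hκθ : κ < θ) (ha : 0 < a)
    (hκv : 2 * κ * v < 1)
    (hmom : ∀ᶠ n : ℕ in atTop, ∑ ω ∈ Finset.univ.filter (fun ω : Fin n → S =>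
        |(∑ j, x (ω j)) / √n| ≤ a * √n),
      (∏ j, q (ω j)) * Real.exp (θ * ((∑ j, x (ω j)) / √n) ^ 2) ≤ C₀)
    (f : ℝ → ℝ) (hf : Continuous f) (C : ℝ) (hC : ∀ y, |f y| ≤ C) :
    Tendsto (fun n : ℕ => ∑ ω ∈ Finset.univ.filter (fun ω : Fin n → S =>
        |(∑ j, x (ω j)) / √n| ≤ a * √n),
      (∏ j, q (ω j)) * (Real.exp (κ * ((∑ j, x (ω j)) / √n) ^ 2) * f ((∑ j, x (ω j)) / √n))) atTop
      (𝓝 ((√(2 * Real.pi * v))⁻¹ * ∫ y, Real.exp (-(1 / (2 * v) - κ) * y ^ 2) * f y)) := by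
  have hC0 : 0 ≤ C := (abs_nonneg _).trans (hC 0)
  have hd : 0 < 1 / (2 * v) - κ := by
    rw [sub_pos, lt_div_iff₀ (by positivity)]; linarith
  have hvne : v.toNNReal ≠ 0 := by simpa using hv
  have hw : ∀ n : ℕ, ∀ ω : Fin n → S, 0 ≤ ∏ j, q (ω j) :=
    fun n ω => Finset.prod_nonneg fun j _ => hq _
  -- truncated limit
  have hR : ∀ R : ℕ, Tendsto (fun n : ℕ => ∑ ω : Fin n → S, (∏ j, q (ω j)) *
      (Real.exp (κ * ((∑ j, x (ω j)) / √n) ^ 2) * f ((∑ j, x (ω j)) / √n) *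
        cutoff R ((∑ j, x (ω j)) / √n))) atTop
      (𝓝 ((√(2 * Real.pi * v))⁻¹ * ∫ y, Real.exp (-(1 / (2 * v) - κ) * y ^ 2) * f y * cutoff R y)) := by
    intro R
    have := fin_clt q x hq h1 hm v hv hvar
      (fun y => Real.exp (κ * y ^ 2) * f y * cutoff R y)
      (by have := cutoff_cont R; fun_prop) (Real.exp (κ * ((R : ℝ) + 1) ^ 2) * C) ?_
    · convert this using 2
      rw [integral_gaussianReal_eq_integral_smul hvne, ← integral_const_mul]
      refine integral_congr_ae (Filter.Eventually.of_forall fun y => ?_)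
      simp only [gaussianPDFReal, smul_eq_mul, Real.coe_toNNReal _ hv.le, sub_zero]
      have : Real.exp (-(1 / (2 * v) - κ) * y ^ 2) =
          Real.exp (-y ^ 2 / (2 * v)) * Real.exp (κ * y ^ 2) := by
        rw [← Real.exp_add]; congr 1; ring
      rw [this]; ring
    · intro y
      rcases le_total |y| ((R : ℝ) + 1) with h | h
      · rw [abs_mul, abs_mul, abs_of_pos (Real.exp_pos _), abs_of_nonneg (cutoff_nonneg _ _)]
        calc _ ≤ Real.exp (κ * y ^ 2) * |f y| * 1 := by
              gcongr; exact cutoff_le_one _ _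
          _ ≤ _ := by
              rw [mul_one, ← sq_abs y]
              gcongr
              exact hC y
      · rw [cutoff_eq_zero _ _ h]; simp; positivity
  -- limit in R
  have hlim : Tendsto (fun R : ℕ => (√(2 * Real.pi * v))⁻¹ *
      ∫ y, Real.exp (-(1 / (2 * v) - κ) * y ^ 2) * f y * cutoff R y) atTop
      (𝓝 ((√(2 * Real.pi * v))⁻¹ * ∫ y, Real.exp (-(1 / (2 * v) - κ) * y ^ 2) * f y)) := by
    refine Tendsto.const_mul _ ?_
    refine tendsto_integral_of_dominated_convergence
      (fun y => Real.exp (-(1 / (2 * v) - κ) * y ^ 2) * C) ?_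
      ((integrable_exp_neg_mul_sq hd).mul_const C) ?_ ?_
    · intro R
      have := cutoff_cont R
      exact Continuous.aestronglyMeasurable (by fun_prop)
    · intro R
      refine Filter.Eventually.of_forall fun y => ?_
      rw [Real.norm_eq_abs, abs_mul, abs_mul, abs_of_pos (Real.exp_pos _), abs_of_nonneg (cutoff_nonneg _ _)]
      calc _ ≤ Real.exp (-(1 / (2 * v) - κ) * y ^ 2) * C * 1 := by
            gcongr
            · exact cutoff_nonneg _ _
            · exact hC y
            · exact cutoff_le_one _ _
        _ = _ := mul_one _
    · refine Filter.Eventually.of_forall fun y => ?_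
      refine tendsto_const_nhds.congr' ?_
      obtain ⟨N, hN⟩ := exists_nat_ge |y|
      filter_upwards [eventually_ge_atTop N] with R hR
      rw [cutoff_eq_one, mul_one]
      exact hN.trans (by exact_mod_cast hR)
  have heps : Tendsto (fun R : ℕ => C * C₀ * Real.exp (-(θ - κ) * (R : ℝ) ^ 2)) atTop (𝓝 0) := by
    rw [← mul_zero (C * C₀)]
    refine Tendsto.const_mul _ (Real.tendsto_exp_atBot.comp ?_)
    refine Tendsto.const_mul_atTop_of_neg (by linarith) ?_
    exact (tendsto_pow_atTop two_ne_zero).comp tendsto_natCast_atTop_atTop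
  have hsq : Tendsto (fun n : ℕ => √(n : ℝ)) atTop atTop :=
    Real.tendsto_sqrt_atTop.comp tendsto_natCast_atTop_atTop
  have htail : ∀ R : ℕ, ∀ᶠ n : ℕ in atTop,
      |(∑ ω ∈ Finset.univ.filter (fun ω : Fin n → S =>
          |(∑ j, x (ω j)) / √n| ≤ a * √n),
        (∏ j, q (ω j)) * (Real.exp (κ * ((∑ j, x (ω j)) / √n) ^ 2) * f ((∑ j, x (ω j)) / √n)))
       - ∑ ω : Fin n → S, (∏ j, q (ω j)) *
      (Real.exp (κ * ((∑ j, x (ω j)) / √n) ^ 2) * f ((∑ j, x (ω j)) / √n) *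
        cutoff R ((∑ j, x (ω j)) / √n))| ≤ C * C₀ * Real.exp (-(θ - κ) * (R : ℝ) ^ 2) := by
    intro R
    filter_upwards [hmom, hsq.eventually_ge_atTop (((R : ℝ) + 1) / a)] with n hn hn2
    rw [div_le_iff₀ ha, mul_comm] at hn2
    set Y : (Fin n → S) → ℝ := fun ω => (∑ j, x (ω j)) / √n with hY
    have e1 : ∑ ω : Fin n → S, (∏ j, q (ω j)) *
        (Real.exp (κ * (Y ω) ^ 2) * f (Y ω) * cutoff R (Y ω)) =
        ∑ ω ∈ Finset.univ.filter (fun ω : Fin n → S => |Y ω| ≤ a * √n), (∏ j, q (ω j)) *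
        (Real.exp (κ * (Y ω) ^ 2) * f (Y ω) * cutoff R (Y ω)) := by
      symm
      refine Finset.sum_subset (Finset.filter_subset _ _) fun ω _ hω => ?_
      rw [Finset.mem_filter] at hω
      have : a * √n < |Y ω| := by
        by_contra h
        exact hω ⟨Finset.mem_univ _, not_lt.1 h⟩
      rw [cutoff_eq_zero _ _ (by linarith)]; simp
    rw [e1, ← Finset.sum_sub_distrib]
    refine (Finset.abs_sum_le_sum_abs _ _).trans ?_
    have e2 : ∀ ω : Fin n → S, |(∏ j, q (ω j)) * (Real.exp (κ * (Y ω) ^ 2) * f (Y ω)) -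
        (∏ j, q (ω j)) * (Real.exp (κ * (Y ω) ^ 2) * f (Y ω) * cutoff R (Y ω))| ≤
        C * Real.exp (-(θ - κ) * (R : ℝ) ^ 2) * ((∏ j, q (ω j)) * Real.exp (θ * (Y ω) ^ 2)) := by
      intro ω
      have e3 : (∏ j, q (ω j)) * (Real.exp (κ * (Y ω) ^ 2) * f (Y ω)) -
        (∏ j, q (ω j)) * (Real.exp (κ * (Y ω) ^ 2) * f (Y ω) * cutoff R (Y ω)) =
        (∏ j, q (ω j)) * (Real.exp (κ * (Y ω) ^ 2) * f (Y ω) * (1 - cutoff R (Y ω))) := by ring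
      have e4 : C * Real.exp (-(θ - κ) * (R : ℝ) ^ 2) * ((∏ j, q (ω j)) * Real.exp (θ * (Y ω) ^ 2))
        = (∏ j, q (ω j)) * (Real.exp (-(θ - κ) * (R : ℝ) ^ 2 + θ * (Y ω) ^ 2) * C) := by
        rw [Real.exp_add]; ring
      rw [e3, e4, abs_mul, abs_of_nonneg (hw n ω)]
      refine mul_le_mul_of_nonneg_left ?_ (hw n ω)
      rcases le_total |Y ω| R with h | h
      · rw [cutoff_eq_one _ _ h]; simp; positivity
      · have h0 := cutoff_nonneg R (Y ω)
        have h1 := cutoff_le_one R (Y ω)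
        rw [abs_mul, abs_mul, abs_of_pos (Real.exp_pos _), abs_of_nonneg (sub_nonneg.2 h1)]
        have h2 : (R : ℝ) ^ 2 ≤ (Y ω) ^ 2 := by
          rw [← sq_abs (Y ω)]; gcongr
        calc _ ≤ Real.exp (κ * (Y ω) ^ 2) * C * 1 := by
              gcongr
              · exact hC _
              · linarith
          _ ≤ _ := by
              rw [mul_one]
              gcongr
              nlinarith
    refine (Finset.sum_le_sum fun ω _ => e2 ω).trans ?_
    rw [← Finset.mul_sum]
    calc _ ≤ C * Real.exp (-(θ - κ) * (R : ℝ) ^ 2) * C₀ := by gcongr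
      _ = _ := by ring
  rw [Metric.tendsto_nhds]
  intro ε hε
  have hA := (Metric.tendsto_nhds.1 hlim) (ε / 3) (by linarith)
  have hB := (Metric.tendsto_nhds.1 heps) (ε / 3) (by linarith)
  obtain ⟨R, hRA, hRB⟩ := (hA.and hB).exists
  filter_upwards [htail R, (Metric.tendsto_nhds.1 (hR R)) (ε / 3) (by linarith)] with n hn1 hn2
  rw [Real.dist_eq] at *
  rw [sub_zero] at hRB
  have h3 := le_abs_self (C * C₀ * Real.exp (-(θ - κ) * (R : ℝ) ^ 2))
  rw [abs_lt] at hRA hn2 ⊢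
  rw [abs_le] at hn1
  constructor <;> linarith [hn1.1, hn1.2, hn2.1, hn2.2, hRA.1, hRA.2]

theorem gauss_ratio (v κ σ2 : ℝ) (hv : 0 < v) (hκv : 2 * κ * v < 1) (hσ : σ2 = v / (1 - 2 * κ * v))
    (f : ℝ → ℝ) :
    ((√(2 * Real.pi * v))⁻¹ * ∫ y, Real.exp (-(1 / (2 * v) - κ) * y ^ 2) * f y) /
    ((√(2 * Real.pi * v))⁻¹ * ∫ y, Real.exp (-(1 / (2 * v) - κ) * y ^ 2) * 1) =
    ∫ y, f y ∂(gaussianReal 0 σ2.toNNReal) := by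
  have h1 : 0 < 1 - 2 * κ * v := by linarith
  have hσ0 : 0 < σ2 := by rw [hσ]; positivity
  have hne : σ2.toNNReal ≠ 0 := by simpa using hσ0
  have hc : (√(2 * Real.pi * v))⁻¹ ≠ 0 := by positivity
  have hd : -(1 / (2 * v) - κ) = - (1 / (2 * σ2)) := by
    rw [hσ]; field_simp
  rw [mul_div_mul_left _ _ hc, hd, integral_gaussianReal_eq_integral_smul hne]
  simp only [mul_one]
  rw [integral_gaussian]
  have : ∀ y, gaussianPDFReal 0 σ2.toNNReal y • f y =
      (√(2 * Real.pi * σ2))⁻¹ * (Real.exp (-(1 / (2 * σ2)) * y ^ 2) * f y) := by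
    intro y
    simp only [gaussianPDFReal, smul_eq_mul, Real.coe_toNNReal _ hσ0.le, sub_zero]
    rw [mul_assoc]; congr 3; ring
  simp_rw [this]
  rw [integral_const_mul, div_eq_inv_mul]
  congr 3
  field_simp

def DD (β t : ℝ) : ℝ := 1 + Real.exp (-β) * (Real.exp t + Real.exp (-t))
def DD1 (β t : ℝ) : ℝ := Real.exp (-β) * (Real.exp t - Real.exp (-t))

theorem DD_pos (β t : ℝ) : 0 < DD β t := by unfold DD; positivity

theorem hasDeriv_DD (β t : ℝ) : HasDerivAt (DD β) (DD1 β t) t := by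
  have h1 := Real.hasDerivAt_exp t
  have h2 : HasDerivAt (fun t : ℝ => Real.exp (-t)) (-Real.exp (-t)) t := by
    simpa using (hasDerivAt_neg t).exp
  have := ((h1.add h2).const_mul (Real.exp (-β))).const_add 1
  exact this.congr_deriv (by unfold DD1; ring)

theorem hasDeriv_DD1 (β t : ℝ) : HasDerivAt (DD1 β) (DD β t - 1) t := by
  have h1 := Real.hasDerivAt_exp t
  have h2 : HasDerivAt (fun t : ℝ => Real.exp (-t)) (-Real.exp (-t)) t := by
    simpa using (hasDerivAt_neg t).exp
  have := ((h1.sub h2).const_mul (Real.exp (-β)))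
  exact this.congr_deriv (by unfold DD; ring)

theorem cBeta_eq (β t : ℝ) : cBeta β t = Real.log (DD β t) - Real.log (1 + 2 * Real.exp (-β)) := by
  unfold cBeta
  rw [Real.log_div]
  · rfl
  · exact (DD_pos β t).ne'
  · positivity

theorem hasDeriv_cBeta (β t : ℝ) : HasDerivAt (cBeta β) (DD1 β t / DD β t) t := by
  have : cBeta β = fun t => Real.log (DD β t) - Real.log (1 + 2 * Real.exp (-β)) :=
    funext (cBeta_eq β)
  rw [this]
  exact ((hasDeriv_DD β t).log (DD_pos β t).ne').sub_const _

theorem deriv_cBeta (β : ℝ) : deriv (cBeta β) = fun t => DD1 β t / DD β t :=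
  funext fun t => (hasDeriv_cBeta β t).deriv

/-- second derivative of `cBeta` -/
def vv (β t : ℝ) : ℝ := ((DD β t - 1) * DD β t - DD1 β t * DD1 β t) / DD β t ^ 2

theorem hasDeriv_cBeta1 (β t : ℝ) : HasDerivAt (fun t => DD1 β t / DD β t) (vv β t) t :=
  (hasDeriv_DD1 β t).div (hasDeriv_DD β t) (DD_pos β t).ne'

theorem iter_cBeta (β t : ℝ) : iteratedDeriv 2 (cBeta β) t = vv β t := by
  rw [iteratedDeriv_succ, iteratedDeriv_one, deriv_cBeta]
  exact (hasDeriv_cBeta1 β t).deriv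

theorem hasDeriv_G (β K z : ℝ) : HasDerivAt (Gfun β K)
    (2 * β * K * z - 2 * β * K * (DD1 β (2 * β * K * z) / DD β (2 * β * K * z))) z := by
  have h1 : HasDerivAt (fun z : ℝ => 2 * β * K * z) (2 * β * K) z := by
    simpa using (hasDerivAt_id z).const_mul (2 * β * K)
  have h2 := (hasDeriv_cBeta β (2 * β * K * z)).comp z h1
  have h3 := ((hasDerivAt_pow 2 z).const_mul (β * K)).sub h2
  exact h3.congr_deriv (by push_cast; ring)

theorem iter_G (β K z : ℝ) : iteratedDeriv 2 (Gfun β K) z =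
    2 * β * K - (2 * β * K) ^ 2 * vv β (2 * β * K * z) := by
  rw [iteratedDeriv_succ, iteratedDeriv_one, funext fun z => (hasDeriv_G β K z).deriv]
  have h1 : HasDerivAt (fun z : ℝ => 2 * β * K * z) (2 * β * K) z := by
    simpa using (hasDerivAt_id z).const_mul (2 * β * K)
  have h2 := (hasDeriv_cBeta1 β (2 * β * K * z)).comp z h1
  have h3 := (h1.sub (h2.const_mul (2 * β * K))).deriv
  refine Eq.trans h3 ?_
  ring

theorem sum_spin (h : ℤ → ℝ) : ∑ s : Spin, h s = h (-1) + h 0 + h 1 := by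
  rw [Finset.sum_coe_sort ({-1, 0, 1} : Finset ℤ) h]
  simp [add_assoc]

def qq (β t : ℝ) (s : ℤ) : ℝ := Real.exp (-β * (s : ℝ) ^ 2 + t * s) / DD β t

theorem mgf_bound (β t v' : ℝ) (hv' : vv β t < v') : ∃ b > 0, ∀ s : ℝ, |s| ≤ b →
    cBeta β (t + s) - cBeta β t - s * (DD1 β t / DD β t) ≤ v' * s ^ 2 / 2 := by
  set h : ℝ → ℝ := fun s => v' * s ^ 2 / 2 - (cBeta β (t + s) - cBeta β t - s * (DD1 β t / DD β t))
  have d1 : ∀ s, HasDerivAt h (v' * s - (DD1 β (t + s) / DD β (t + s) - DD1 β t / DD β t)) s := by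
    intro s
    have h1 : HasDerivAt (fun s => t + s) 1 s := by simpa using (hasDerivAt_id s).const_add t
    have h2 := ((hasDeriv_cBeta β (t + s)).comp s h1).sub_const (cBeta β t)
    have h3 := ((hasDerivAt_pow 2 s).const_mul v').div_const 2
    have h4 := h3.sub (h2.sub ((hasDerivAt_id s).mul_const (DD1 β t / DD β t)))
    exact h4.congr_deriv (by push_cast; ring)
  have d1' : deriv h = fun s => v' * s - (DD1 β (t + s) / DD β (t + s) - DD1 β t / DD β t) :=
    funext fun s => (d1 s).deriv
  have d2 : HasDerivAt (deriv h) (v' - vv β t) 0 := by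
    rw [d1']
    have h1 : HasDerivAt (fun s => t + s) 1 (0 : ℝ) := by simpa using (hasDerivAt_id (0:ℝ)).const_add t
    have h2 := (HasDerivAt.comp (0:ℝ) (hasDeriv_cBeta1 β (t + 0)) h1).sub_const (DD1 β t / DD β t)
    have h3 := ((hasDerivAt_id (0:ℝ)).const_mul v').sub h2
    exact h3.congr_deriv (by simp)
  have hmin : IsLocalMin h 0 := by
    refine isLocalMin_of_deriv_deriv_pos ?_ ?_ (d1 0).continuousAt
    · rw [d2.deriv]; linarith
    · rw [d1']; simp
  obtain ⟨b, hb, hb2⟩ := Metric.eventually_nhds_iff.1 hmin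
  refine ⟨b / 2, by positivity, fun s hs => ?_⟩
  have := hb2 (y := s) (by rw [Real.dist_eq, sub_zero]; linarith)
  simp only [h] at this
  simp at this
  linarith

theorem core (β K z : ℝ) (hβ : 0 < β) (hK : 0 < K)
    (hz : DD1 β (2 * β * K * z) / DD β (2 * β * K * z) = z)
    (hG : 0 < 2 * β * K - (2 * β * K) ^ 2 * vv β (2 * β * K * z)) :
    ∃ A : ℝ, 0 < A ∧ ∀ a ∈ Set.Ioo (0 : ℝ) A,
      ∀ f : ℝ → ℝ, Continuous f → (∃ C : ℝ, ∀ x, |f x| ≤ C) →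
        Filter.Tendsto (fun n : ℕ =>
            (∑ ω ∈ Finset.univ.filter (fun ω : Fin n → Spin =>
                totalSpin n ω / n ∈ Set.Icc (z - a) (z + a)),
              canonP β K n ω * f ((totalSpin n ω - n * z) / Real.sqrt n)) /
            (∑ ω ∈ Finset.univ.filter (fun ω : Fin n → Spin =>
                totalSpin n ω / n ∈ Set.Icc (z - a) (z + a)),
              canonP β K n ω))
          Filter.atTop
          (nhds (∫ x, f x ∂(ProbabilityTheory.gaussianReal 0
            (Real.toNNReal (2 * β * K * vv β (2 * β * K * z) /
              (2 * β * K - (2 * β * K) ^ 2 * vv β (2 * β * K * z))))))) := by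
  set t := 2 * β * K * z with ht
  set v := vv β t with hvdef
  set κ := β * K with hκ
  have hκ0 : 0 < κ := mul_pos hβ hK
  have hDp := DD_pos β t
  have hE : Real.exp t * Real.exp (-t) = 1 := by rw [← Real.exp_add]; simp
  have hv : 0 < v := by
    have hb := Real.exp_pos (-β)
    have h1 := Real.exp_pos t
    have h2 := Real.exp_pos (-t)
    refine div_pos ?_ (by positivity)
    have : (DD β t - 1) * DD β t - DD1 β t * DD1 β t =
      Real.exp (-β) * (Real.exp t + Real.exp (-t)) + 4 * Real.exp (-β) ^ 2 * (Real.exp t * Real.exp (-t)) := by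
      unfold DD DD1; ring
    rw [this]; positivity
  have hκv : 2 * κ * v < 1 := by
    have : 0 < 2 * κ * (1 - 2 * κ * v) := by
      have e : 2 * β * K - (2 * β * K) ^ 2 * v = 2 * κ * (1 - 2 * κ * v) := by rw [hκ]; ring
      linarith
    have := pos_of_mul_pos_right this (by positivity)
    linarith
  -- weights
  let q : Spin → ℝ := fun s => qq β t s
  let x : Spin → ℝ := fun s => ((s : ℤ) : ℝ) - z
  have hq : ∀ s, 0 ≤ q s := fun s => div_nonneg (Real.exp_pos _).le hDp.le
  have hqm : qq β t (-1) = Real.exp (-β) * Real.exp (-t) / DD β t := by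
    unfold qq; rw [← Real.exp_add]; push_cast; ring_nf
  have hq0 : qq β t 0 = 1 / DD β t := by unfold qq; simp
  have hqp : qq β t 1 = Real.exp (-β) * Real.exp t / DD β t := by
    unfold qq; rw [← Real.exp_add]; push_cast; ring_nf
  have h1 : ∑ s, q s = 1 := by
    have := sum_spin (fun s => qq β t s)
    refine this.trans ?_
    rw [hqm, hq0, hqp, ← add_div, ← add_div, div_eq_one_iff_eq hDp.ne']
    unfold DD; ring
  have hm : ∑ s, q s * x s = 0 := by
    have := sum_spin (fun s => qq β t s * ((s : ℝ) - z))
    refine this.trans ?_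
    rw [hqm, hq0, hqp, ← hz]
    field_simp
    push_cast
    unfold DD DD1; ring
  have hvar : ∑ s, q s * x s ^ 2 = v := by
    have := sum_spin (fun s => qq β t s * ((s : ℝ) - z) ^ 2)
    refine this.trans ?_
    rw [hqm, hq0, hqp, ← hz, hvdef]
    unfold vv
    field_simp
    push_cast
    unfold DD DD1; ring
  -- constants
  obtain ⟨θ, hθ1, hθ2⟩ : ∃ θ, κ < θ ∧ 2 * θ * v < 1 := by
    have : κ < 1 / (2 * v) := by rw [lt_div_iff₀ (by positivity)]; linarith
    obtain ⟨θ, h1, h2⟩ := exists_between this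
    refine ⟨θ, h1, ?_⟩
    rw [lt_div_iff₀ (by positivity)] at h2; linarith
  have hθ0 : 0 < θ := hκ0.trans hθ1
  obtain ⟨v', hv1, hv2⟩ : ∃ v', v < v' ∧ 2 * θ * v' < 1 := by
    have : v < 1 / (2 * θ) := by rw [lt_div_iff₀ (by positivity)]; linarith
    obtain ⟨v', h1, h2⟩ := exists_between this
    refine ⟨v', h1, ?_⟩
    rw [lt_div_iff₀ (by positivity)] at h2; linarith
  obtain ⟨b, hb0, hb⟩ := mgf_bound β t v' hv1
  have hmgf : ∀ s, |s| ≤ b → ∑ i, q i * Real.exp (s * x i) ≤ Real.exp (v' * s ^ 2 / 2) := by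
    intro s hs
    refine le_trans (le_of_eq ?_) (Real.exp_le_exp.2 (hb s hs))
    have := sum_spin (fun i => qq β t i * Real.exp (s * ((i : ℝ) - z)))
    refine this.trans ?_
    rw [cBeta_eq, cBeta_eq, hz]
    have e : Real.log (DD β (t + s)) - Real.log (1 + 2 * Real.exp (-β)) -
      (Real.log (DD β t) - Real.log (1 + 2 * Real.exp (-β))) - s * z =
      Real.log (DD β (t + s)) - Real.log (DD β t) + (- (s * z)) := by ring
    rw [e, Real.exp_add, Real.exp_sub, Real.exp_log (DD_pos _ _), Real.exp_log (DD_pos _ _), hqm, hq0, hqp]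
    have e1 : Real.exp (s * (((-1 : ℤ) : ℝ) - z)) = Real.exp (-s) * Real.exp (-(s * z)) := by
      rw [← Real.exp_add]; push_cast; ring_nf
    have e2 : Real.exp (s * (((0 : ℤ) : ℝ) - z)) = Real.exp (-(s * z)) := by
      push_cast; ring_nf
    have e3 : Real.exp (s * (((1 : ℤ) : ℝ) - z)) = Real.exp s * Real.exp (-(s * z)) := by
      rw [← Real.exp_add]; push_cast; ring_nf
    rw [e1, e2, e3]
    have e4 : DD β (t + s) = 1 + Real.exp (-β) * (Real.exp t * Real.exp s + Real.exp (-t) * Real.exp (-s)) := by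
      unfold DD; rw [← Real.exp_add, ← Real.exp_add]; ring_nf
    rw [e4]
    ring
  refine ⟨b / (2 * θ), by positivity, ?_⟩
  rintro a ⟨ha0, ha⟩ f hf ⟨C, hC⟩
  rw [lt_div_iff₀ (by positivity)] at ha
  obtain ⟨C₀, hC₀⟩ := exp_moment q x hq b v' θ a hθ0 ha0 hv2 (by linarith) hmgf
  have L1 := weighted_clt q x hq h1 hm v hv hvar κ θ a C₀ hκ0 hθ1 ha0 hκv hC₀ f hf C hC
  have L2 := weighted_clt q x hq h1 hm v hv hvar κ θ a C₀ hκ0 hθ1 ha0 hκv hC₀ (fun _ => 1)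
    continuous_const 1 (by simp)
  have hne : (√(2 * Real.pi * v))⁻¹ * ∫ y, Real.exp (-(1 / (2 * v) - κ) * y ^ 2) * 1 ≠ 0 := by
    have hd : 0 < 1 / (2 * v) - κ := by
      rw [sub_pos, lt_div_iff₀ (by positivity)]; linarith
    simp only [mul_one]
    rw [integral_gaussian]
    have := Real.pi_pos
    positivity
  have L := L1.div L2 hne
  rw [gauss_ratio v κ (2 * β * K * v / (2 * β * K - (2 * β * K) ^ 2 * v)) hv hκv ?_ f] at L
  swap
  · have h5 : (1 - 2 * κ * v) ≠ 0 := by linarith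
    have e : 2 * β * K - (2 * β * K) ^ 2 * v = 2 * κ * (1 - 2 * κ * v) := by rw [hκ]; ring
    have e' : 2 * β * K * v = 2 * κ * v := by rw [hκ]; ring
    rw [e, e', mul_div_mul_left _ _ (by positivity)]
  refine L.congr' ?_
  filter_upwards [eventually_gt_atTop 0] with n hn
  have hn0 : (0 : ℝ) < n := by exact_mod_cast hn
  have hsn : 0 < √(n : ℝ) := Real.sqrt_pos.2 hn0
  have hss : √(n : ℝ) * √n = n := Real.mul_self_sqrt hn0.le
  have hsum : ∀ ω : Fin n → Spin, ∑ j, x (ω j) = totalSpin n ω - n * z := by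
    intro ω
    simp only [x, totalSpin, Finset.sum_sub_distrib]
    simp
  have hfil : Finset.univ.filter (fun ω : Fin n → Spin => |(∑ j, x (ω j)) / √n| ≤ a * √n) =
      Finset.univ.filter (fun ω : Fin n → Spin => totalSpin n ω / n ∈ Set.Icc (z - a) (z + a)) := by
    ext ω
    simp only [Finset.mem_filter, Finset.mem_univ, true_and, Set.mem_Icc]
    rw [hsum, abs_div, abs_of_pos hsn, div_le_iff₀ hsn, mul_assoc, hss, abs_le, le_div_iff₀ hn0,
      div_le_iff₀ hn0]
    constructor <;> rintro ⟨h1, h2⟩ <;> constructor <;> linarith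
  set Z := ∑ ω' : Fin n → Spin, Real.exp (-β * ham K n ω') with hZ
  have hZ0 : 0 < Z := Finset.sum_pos (fun _ _ => Real.exp_pos _) ⟨fun _ => ⟨0, by simp⟩, Finset.mem_univ _⟩
  have hcan : ∀ ω : Fin n → Spin, canonP β K n ω =
      (DD β t ^ n * Real.exp (-κ * n * z ^ 2) / Z) *
        ((∏ j, q (ω j)) * Real.exp (κ * ((∑ j, x (ω j)) / √n) ^ 2)) := by
    intro ω
    have e1 : ∏ j, q (ω j) = Real.exp (-β * (∑ j, ((ω j : ℤ) : ℝ) ^ 2) + t * totalSpin n ω) / DD β t ^ n := by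
      simp only [q, qq, Finset.prod_div_distrib, ← Real.exp_sum, Finset.sum_add_distrib,
        ← Finset.mul_sum, totalSpin]
      simp
    have e2 : -β * ham K n ω = -κ * n * z ^ 2 + (-β * (∑ j, ((ω j : ℤ) : ℝ) ^ 2) + t * totalSpin n ω)
        + κ * ((∑ j, x (ω j)) / √n) ^ 2 := by
      rw [hsum, div_pow, sq (√(n : ℝ)), hss, ht, hκ]
      unfold ham
      change -β * (_ - K / n * (totalSpin n ω) ^ 2) = _
      field_simp
      ring
    have hD0 : DD β t ^ n ≠ 0 := (pow_pos hDp n).ne'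
    unfold canonP
    rw [← hZ, e1, e2, Real.exp_add, Real.exp_add]
    field_simp
  have hcc : DD β t ^ n * Real.exp (-κ * n * z ^ 2) / Z ≠ 0 := by positivity
  generalize DD β t ^ n * Real.exp (-κ * n * z ^ 2) / Z = c at hcan hcc
  simp only [Pi.div_apply]
  rw [hfil]
  simp_rw [hcan, mul_assoc, ← Finset.mul_sum]
  rw [mul_div_mul_left _ _ hcc]
  simp only [mul_one, hsum]

end Aux

/-- Suppose the set of global minimum points of `G_{β,K}` is
`{z_1, …, z_m}` with `m = 2` or `m = 3` distinct points and `G_{β,K}''(z_j) > 0` for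
each `j`.  With `σ_j² = 2βK c_β''(2βK z_j)/G_{β,K}''(z_j)`, for each `j` there is
`A > 0` such that for every `a ∈ (0, A)` the conditional distribution of
`(S_n − n z_j)/n^{1/2}` under `P_{n,β,K}` given `{S_n/n ∈ [z_j − a, z_j + a]}`
converges weakly to the centered Gaussian with variance `σ_j²`. -/
theorem conditioned_clt_total_spin (β K : ℝ) (hβ : 0 < β) (hK : 0 < K)
    (m : ℕ) (hm : m = 2 ∨ m = 3) (zs : Fin m → ℝ) (hzs : Function.Injective zs)
    (hset : {z : ℝ | IsMinOn (Gfun β K) Set.univ z} = Set.range zs)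
    (hpos : ∀ j : Fin m, 0 < iteratedDeriv 2 (Gfun β K) (zs j)) :
    ∀ j : Fin m, ∃ A : ℝ, 0 < A ∧ ∀ a ∈ Set.Ioo (0 : ℝ) A,
      ∀ f : ℝ → ℝ, Continuous f → (∃ C : ℝ, ∀ x, |f x| ≤ C) →
        Filter.Tendsto (fun n : ℕ =>
            (∑ ω ∈ Finset.univ.filter (fun ω : Fin n → Spin =>
                totalSpin n ω / n ∈ Set.Icc (zs j - a) (zs j + a)),
              canonP β K n ω * f ((totalSpin n ω - n * zs j) / Real.sqrt n)) /
            (∑ ω ∈ Finset.univ.filter (fun ω : Fin n → Spin =>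
                totalSpin n ω / n ∈ Set.Icc (zs j - a) (zs j + a)),
              canonP β K n ω))
          Filter.atTop
          (nhds (∫ x, f x ∂(ProbabilityTheory.gaussianReal 0
            (Real.toNNReal (2 * β * K * iteratedDeriv 2 (cBeta β) (2 * β * K * zs j) /
              iteratedDeriv 2 (Gfun β K) (zs j)))))) := by
  intro j
  have hmin : IsMinOn (Gfun β K) Set.univ (zs j) := by
    have : zs j ∈ {z : ℝ | IsMinOn (Gfun β K) Set.univ z} := by rw [hset]; exact ⟨j, rfl⟩
    exact this
  have hloc : IsLocalMin (Gfun β K) (zs j) := hmin.isLocalMin Filter.univ_mem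
  have hd := hloc.hasDerivAt_eq_zero (hasDeriv_G β K (zs j))
  have hp := hpos j
  simp only [iter_G, iter_cBeta] at hp ⊢
  refine core β K (zs j) hβ hK ?_ hp
  have : 2 * β * K * (zs j - DD1 β (2 * β * K * zs j) / DD β (2 * β * K * zs j)) = 0 := by linarith
  rcases mul_eq_zero.1 this with h | h
  · exact absurd h (by positivity)
  · linarith
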